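/- The restricted inclusion atom is characterized by an existential extension: let M be a multiteam over α, f, g : α → β, and A : β → Prop a (decidable) condition. Then Multiset.map f (M.filter (fun s => A (f s))) ≤ Multiset.map g M if and only if there exists a multiteam N : Multiset (α × β) such that Multiset.map Prod.fst N = M, Multiset.map Prod.snd N ≤ Multiset.map (fun p => f p.1) N, and for every pair p occurring in N, if A p.2 then p.2 = g p.1. -/

import Mathlib

theorem ms_exists_le_of_le_map {α β : Type*} (g : α → β) (s : Multiset β) (M : Multiset α)
    (h : s ≤ M.map g) : ∃ M₁, M₁ ≤ M ∧ M₁.map g = s := by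
  induction s using Quotient.inductionOn with | _ l => ?_
  induction M using Quotient.inductionOn with | _ m => ?_
  obtain ⟨k, hp, hs⟩ : l.Subperm (m.map g) := h
  obtain ⟨n, hm, rfl⟩ := List.sublist_map_iff.1 hs
  exact ⟨(n : Multiset α), hm.subperm, Quot.sound hp⟩

theorem ms_exists_zip {α β : Type*} (s : Multiset α) (t : Multiset β)
    (h : s.card = t.card) : ∃ N : Multiset (α × β), N.map Prod.fst = s ∧ N.map Prod.snd = t := by
  induction s using Quotient.inductionOn with | _ l => ?_
  induction t using Quotient.inductionOn with | _ m => ?_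
  have hlen : l.length = m.length := h
  refine ⟨(l.zip m : List (α × β)), ?_, ?_⟩
  · exact congrArg (fun x : List α => (x : Multiset α)) (List.map_fst_zip hlen.le)
  · exact congrArg (fun x : List β => (x : Multiset β)) (List.map_snd_zip hlen.ge)

/-- The restricted inclusion atom is characterized by an existential extension. -/
theorem restricted_inclusion_iff_existential_extension
    {α β : Type*} (M : Multiset α) (f g : α → β) (A : β → Prop) [DecidablePred A] :
    Multiset.map f (M.filter (fun s => A (f s))) ≤ Multiset.map g M ↔
      ∃ N : Multiset (α × β),
        Multiset.map Prod.fst N = M ∧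
        Multiset.map Prod.snd N ≤ Multiset.map (fun p => f p.1) N ∧
        ∀ p ∈ N, A p.2 → p.2 = g p.1 := by
  constructor
  · intro h
    obtain ⟨M₁, hM, h1⟩ := ms_exists_le_of_le_map g _ M h
    obtain ⟨R, rfl⟩ := Multiset.le_iff_exists_add.1 hM
    have hsplit := Multiset.filter_add_not (fun s => A (f s)) (M₁ + R)
    have hc := congrArg Multiset.card hsplit
    have hc1 := congrArg Multiset.card h1
    simp only [Multiset.card_add, Multiset.card_map] at hc hc1
    obtain ⟨N, hN1, hN2⟩ := ms_exists_zip R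
      (((M₁ + R).filter (fun s => ¬ A (f s))).map f) (by rw [Multiset.card_map]; omega)
    have e1 : Multiset.map Prod.fst (M₁.map (fun s => (s, g s)) + N) = M₁ + R := by
      simp [hN1]
    refine ⟨M₁.map (fun s => (s, g s)) + N, e1, ?_, ?_⟩
    · have e2 : Multiset.map (fun p : α × β => f p.1) (M₁.map (fun s => (s, g s)) + N)
          = (M₁ + R).map f := by
        rw [← e1, Multiset.map_map]; rfl
      rw [e2, Multiset.map_add, hN2, Multiset.map_map]
      have e3 : M₁.map (Prod.snd ∘ fun s => (s, g s)) = M₁.map g := rfl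
      rw [e3, h1, ← Multiset.map_add, hsplit]
    · intro p hp hA
      rcases Multiset.mem_add.1 hp with hp | hp
      · obtain ⟨s, _, rfl⟩ := Multiset.mem_map.1 hp
        rfl
      · have := Multiset.mem_map_of_mem Prod.snd hp
        rw [hN2] at this
        obtain ⟨s, hs, he⟩ := Multiset.mem_map.1 this
        exact absurd (he ▸ hA) (Multiset.mem_filter.1 hs).2
  · rintro ⟨N, rfl, h, hA⟩
    have he := Multiset.eq_of_le_of_card_le h (by simp)
    have h2 : Multiset.map f ((N.map Prod.fst).filter (fun s => A (f s)))
        = (N.map (fun p => f p.1)).filter A := by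
      simp only [Multiset.filter_map, Multiset.map_map]; rfl
    rw [h2, ← he, Multiset.filter_map, Multiset.map_map]
    have h3 : Multiset.map Prod.snd (N.filter (A ∘ Prod.snd))
        = Multiset.map (g ∘ Prod.fst) (N.filter (A ∘ Prod.snd)) :=
      Multiset.map_congr rfl fun p hp =>
        hA p (Multiset.mem_filter.1 hp).1 (Multiset.mem_filter.1 hp).2
    rw [h3]
    exact Multiset.map_le_map (Multiset.filter_le _ _)
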